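/- arXiv:1901.08270 — 3 statements merged into one kernel-verified Lean document; each statement's English description precedes it below -/
import Mathlib

section
/- Let h > 0 be a real number and let φ_n : [0, nh] → [0,∞), for n ≥ 1, be a sequence of bounded concave functions such that φ_{n+m} ≤ φ_n ⊗ φ_m for all n, m ≥ 1. Then for all integers k, n ≥ 1 and all x ∈ [0, kh], one has φ_{kn}(nx) ≤ n · φ_k(x). -/
/-- The tropical convolution of `f : [0,h₁] → ℝ` and `g : [0,h₂] → ℝ`:
`(f ⊗ g)(x) = sup { f a + g b : 0 ≤ a ≤ h₁, 0 ≤ b ≤ h₂, a + b = x }`. -/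
noncomputable def tropConv (h₁ h₂ : ℝ) (f g : ℝ → ℝ) : ℝ → ℝ := fun x =>
  sSup {y | ∃ a b : ℝ, 0 ≤ a ∧ a ≤ h₁ ∧ 0 ≤ b ∧ b ≤ h₂ ∧ a + b = x ∧ y = f a + g b}

/-- For a sequence of bounded concave nonnegative functions `φ_n : [0, nh] → [0,∞)`
satisfying `φ_{n+m} ≤ φ_n ⊗ φ_m`, one has `φ_{kn}(nx) ≤ n · φ_k(x)` for all
`k, n ≥ 1` and `x ∈ [0, kh]`. -/
theorem phi_mul_le (h : ℝ) (hh : 0 < h) (φ : ℕ → ℝ → ℝ)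
    (hconc : ∀ n : ℕ, 1 ≤ n → ConcaveOn ℝ (Set.Icc 0 ((n : ℝ) * h)) (φ n))
    (hnonneg : ∀ n : ℕ, 1 ≤ n → ∀ x ∈ Set.Icc (0 : ℝ) ((n : ℝ) * h), 0 ≤ φ n x)
    (hbdd : ∀ n : ℕ, 1 ≤ n → ∃ C : ℝ, ∀ x ∈ Set.Icc (0 : ℝ) ((n : ℝ) * h), φ n x ≤ C)
    (hsub : ∀ n : ℕ, 1 ≤ n → ∀ m : ℕ, 1 ≤ m →
      ∀ x ∈ Set.Icc (0 : ℝ) (((n : ℝ) + (m : ℝ)) * h),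
        φ (n + m) x ≤ tropConv ((n : ℝ) * h) ((m : ℝ) * h) (φ n) (φ m) x) :
    ∀ k : ℕ, 1 ≤ k → ∀ n : ℕ, 1 ≤ n → ∀ x ∈ Set.Icc (0 : ℝ) ((k : ℝ) * h),
      φ (k * n) ((n : ℝ) * x) ≤ (n : ℝ) * φ k x := by
  intro k hk n hn
  induction n, hn using Nat.le_induction with
  | base => intro x hx; simp
  | succ n hn ih =>
    intro x hx
    have hn0 : (0 : ℝ) < n := by exact_mod_cast hn
    have hkn : 1 ≤ k * n := Nat.mul_pos hk hn
    have h1 := hsub (k * n) hkn k hk (((n + 1 : ℕ) : ℝ) * x) (by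
      obtain ⟨hx0, hx1⟩ := hx
      constructor
      · positivity
      · push_cast
        nlinarith)
    rw [Nat.mul_succ]
    refine h1.trans ?_
    unfold tropConv
    apply Real.sSup_le
    · rintro y ⟨a, b, ha0, ha1, hb0, hb1, hab, rfl⟩
      push_cast at ha1 hab ⊢
      have hy : a / n ∈ Set.Icc (0 : ℝ) ((k : ℝ) * h) := by
        refine ⟨by positivity, ?_⟩
        rw [div_le_iff₀ hn0]
        linarith
      have h2 := ih (a / n) hy
      rw [mul_div_cancel₀ a hn0.ne'] at h2
      have hp : (0 : ℝ) < n + 1 := by positivity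
      have h3 := (hconc k hk).2 hy (show b ∈ Set.Icc (0 : ℝ) ((k : ℝ) * h) from ⟨hb0, hb1⟩)
        (show (0 : ℝ) ≤ n / (n + 1) by positivity) (show (0 : ℝ) ≤ 1 / (n + 1) by positivity)
        (by field_simp)
      have h4 : (n / (n + 1) : ℝ) • (a / n) + (1 / (n + 1) : ℝ) • b = x := by
        simp only [smul_eq_mul]
        field_simp
        linarith
      rw [h4] at h3
      simp only [smul_eq_mul] at h3
      have h5 := mul_le_mul_of_nonneg_left h3 hp.le
      have h6 : ((n : ℝ) + 1) * (n / (n + 1) * φ k (a / n) + 1 / (n + 1) * φ k b)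
          = n * φ k (a / n) + φ k b := by
        field_simp
      linarith
    · exact mul_nonneg (Nat.cast_nonneg _) (hnonneg k hk x hx)
end

section
/- Let h > 0 be a real number and let φ_n : [0, nh] → [0,∞), for n ≥ 1, be a sequence of bounded concave functions such that φ_{n+m} ≤ φ_n ⊗ φ_m for all n, m ≥ 1. Fix an integer n₀ ≥ 1 and let C ≥ 0 be a constant such that φ_r(t) ≤ C for every integer 1 ≤ r < n₀ and every t ∈ [0, rh]. Then for every integer n ≥ 1 and every x ∈ [0, h], one has φ_n(nx) ≤ (n/n₀) · φ_{n₀}(n₀ x) + C. -/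
/-- For a sequence of bounded concave nonnegative functions `φ_n : [0, nh] → [0,∞)`
satisfying `φ_{n+m} ≤ φ_n ⊗ φ_m`, with `n₀ ≥ 1` fixed and `C ≥ 0` bounding `φ_r`
for all `1 ≤ r < n₀`, one has `φ_n(nx) ≤ (n/n₀) · φ_{n₀}(n₀ x) + C` for every
`n ≥ 1` and `x ∈ [0, h]`. -/
theorem phi_le_of_fixed (h : ℝ) (hh : 0 < h) (φ : ℕ → ℝ → ℝ)
    (hconc : ∀ n : ℕ, 1 ≤ n → ConcaveOn ℝ (Set.Icc 0 ((n : ℝ) * h)) (φ n))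
    (hnonneg : ∀ n : ℕ, 1 ≤ n → ∀ x ∈ Set.Icc (0 : ℝ) ((n : ℝ) * h), 0 ≤ φ n x)
    (hbdd : ∀ n : ℕ, 1 ≤ n → ∃ C : ℝ, ∀ x ∈ Set.Icc (0 : ℝ) ((n : ℝ) * h), φ n x ≤ C)
    (hsub : ∀ n : ℕ, 1 ≤ n → ∀ m : ℕ, 1 ≤ m →
      ∀ x ∈ Set.Icc (0 : ℝ) (((n : ℝ) + (m : ℝ)) * h),
        φ (n + m) x ≤ tropConv ((n : ℝ) * h) ((m : ℝ) * h) (φ n) (φ m) x)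
    (n₀ : ℕ) (hn₀ : 1 ≤ n₀) (C : ℝ) (hC : 0 ≤ C)
    (hCb : ∀ r : ℕ, 1 ≤ r → r < n₀ → ∀ t ∈ Set.Icc (0 : ℝ) ((r : ℝ) * h), φ r t ≤ C) :
    ∀ n : ℕ, 1 ≤ n → ∀ x ∈ Set.Icc (0 : ℝ) h,
      φ n ((n : ℝ) * x) ≤ ((n : ℝ) / (n₀ : ℝ)) * φ n₀ ((n₀ : ℝ) * x) + C := by
  intro n
  induction n using Nat.strong_induction_on with
  | _ n ih =>
  intro hn x hx
  obtain ⟨hx0, hxh⟩ := hx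
  have hn0 : (0 : ℝ) < n₀ := by exact_mod_cast hn₀
  have hnp : (0 : ℝ) < n := by exact_mod_cast hn
  have hmem : (n₀ : ℝ) * x ∈ Set.Icc (0 : ℝ) ((n₀ : ℝ) * h) :=
    ⟨by positivity, mul_le_mul_of_nonneg_left hxh hn0.le⟩
  have hpos := hnonneg n₀ hn₀ _ hmem
  have hpos2 : 0 ≤ ((n : ℝ) / (n₀ : ℝ)) * φ n₀ ((n₀ : ℝ) * x) := by positivity
  rcases lt_trichotomy n n₀ with hlt | heq | hgt
  · have := hCb n hn hlt ((n : ℝ) * x)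
      ⟨by positivity, mul_le_mul_of_nonneg_left hxh hnp.le⟩
    linarith
  · subst heq
    rw [div_self hn0.ne']
    linarith
  · obtain ⟨m, rfl⟩ := Nat.exists_eq_add_of_lt hgt
    rw [Nat.add_assoc] at *
    generalize hk : m + 1 = k at *
    have hk1 : 1 ≤ k := by omega
    have hkp : (0 : ℝ) < k := by exact_mod_cast hk1
    push_cast at hnp hpos2 ⊢
    refine (hsub n₀ hn₀ k hk1 _ ⟨by positivity, mul_le_mul_of_nonneg_left hxh hnp.le⟩).trans ?_
    unfold tropConv
    refine Real.sSup_le ?_ (by linarith)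
    rintro y ⟨a, b, ha0, ha, hb0, hb, hab, rfl⟩
    have hbk : b / k ∈ Set.Icc (0 : ℝ) h :=
      ⟨by positivity, by rw [div_le_iff₀ hkp]; linarith⟩
    have h1 := ih k (by omega) hk1 (b / k) hbk
    rw [mul_div_cancel₀ b hkp.ne'] at h1
    have hbm : (n₀ : ℝ) * (b / k) ∈ Set.Icc (0 : ℝ) ((n₀ : ℝ) * h) :=
      ⟨mul_nonneg hn0.le hbk.1, mul_le_mul_of_nonneg_left hbk.2 hn0.le⟩
    have h2 := (hconc n₀ hn₀).2 (⟨ha0, ha⟩ : a ∈ Set.Icc (0 : ℝ) ((n₀ : ℝ) * h)) hbm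
      (by positivity : (0 : ℝ) ≤ (n₀ : ℝ) / ((n₀ : ℝ) + (k : ℝ)))
      (by positivity : (0 : ℝ) ≤ (k : ℝ) / ((n₀ : ℝ) + (k : ℝ))) (by field_simp)
    simp only [smul_eq_mul] at h2
    have e : (n₀ : ℝ) / (n₀ + k) * a + (k : ℝ) / (n₀ + k) * (n₀ * (b / k)) = n₀ * x := by
      have hx' : x = (a + b) / (n₀ + k) := by rw [hab]; field_simp
      rw [hx']; field_simp
    rw [e] at h2
    have h3 := mul_le_mul_of_nonneg_left h2 (by positivity : (0 : ℝ) ≤ (n₀ + k) / n₀)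
    have e2 : ((n₀ : ℝ) + k) / n₀ * ((n₀ : ℝ) / (n₀ + k) * φ n₀ a
        + (k : ℝ) / (n₀ + k) * φ n₀ (n₀ * (b / k)))
        = φ n₀ a + (k : ℝ) / n₀ * φ n₀ (n₀ * (b / k)) := by
      generalize φ n₀ a = u
      generalize φ n₀ (n₀ * (b / k)) = v
      field_simp
    linarith
end

section
/- Let h > 0 be a real number and let φ_n : [0, nh] → [0,∞), for n ≥ 1, be a sequence of bounded concave functions such that φ_{n+m} ≤ φ_n ⊗ φ_m for all n, m ≥ 1. Then the sequence of functions x ↦ (1/n) φ_n(nx) on [0, h] converges uniformly, as n → ∞, to a concave function on [0, h] which equals the pointwise infimum over n ≥ 1 of the functions x ↦ (1/n) φ_n(nx). -/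
lemma aux_conc {H : ℝ} {f : ℝ → ℝ} (hf : ConcaveOn ℝ (Set.Icc 0 H) f) {x y a b : ℝ}
    (hx : x ∈ Set.Icc 0 H) (hy : y ∈ Set.Icc 0 H) (ha : 0 ≤ a) (hb : 0 ≤ b) (hab : a + b = 1) :
    a • f x + b • f y ≤ f (a • x + b • y) := hf.2 hx hy ha hb hab

lemma aux_left {H : ℝ} {f : ℝ → ℝ} (hf : ConcaveOn ℝ (Set.Icc 0 H) f)
    (h0 : ∀ x ∈ Set.Icc (0:ℝ) H, 0 ≤ f x) {t u : ℝ} (ht : 0 ≤ t) (htu : t ≤ u) (hu : u ≤ H) :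
    (H - u) * f t ≤ (H - t) * f u := by
  rcases eq_or_lt_of_le (htu.trans hu) with h | h
  · have : u = t := by linarith
    subst this
    exact le_rfl
  have hp : 0 < H - t := by linarith
  have h1 := aux_conc hf (x := t) (y := H) ⟨ht, h.le⟩ ⟨by linarith, le_rfl⟩
    (a := (H - u) / (H - t)) (b := (u - t) / (H - t))
    (div_nonneg (by linarith) hp.le) (div_nonneg (by linarith) hp.le)
    (by field_simp; ring)
  have e : ((H - u) / (H - t)) • t + ((u - t) / (H - t)) • H = u := by
    simp only [smul_eq_mul]; field_simp; ring
  rw [e] at h1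
  simp only [smul_eq_mul] at h1
  have h2 : 0 ≤ (u - t) / (H - t) * f H :=
    mul_nonneg (div_nonneg (by linarith) hp.le) (h0 H ⟨by linarith, le_rfl⟩)
  have h3 : (H - u) / (H - t) * f t ≤ f u := by linarith
  rw [div_mul_eq_mul_div, div_le_iff₀ hp] at h3
  linarith

lemma aux_refl {H : ℝ} {f : ℝ → ℝ} (hf : ConcaveOn ℝ (Set.Icc 0 H) f) :
    ConcaveOn ℝ (Set.Icc 0 H) (fun x => f (H - x)) := by
  refine ⟨convex_Icc _ _, ?_⟩
  intro x hx y hy a b ha hb hab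
  have := aux_conc hf (x := H - x) (y := H - y) ⟨by linarith [hx.2], by linarith [hx.1]⟩
    ⟨by linarith [hy.2], by linarith [hy.1]⟩ ha hb hab
  have e : a • (H - x) + b • (H - y) = H - (a • x + b • y) := by
    simp only [smul_eq_mul]; linear_combination H * hab
  rw [e] at this
  exact this

lemma aux_right {H : ℝ} {f : ℝ → ℝ} (hf : ConcaveOn ℝ (Set.Icc 0 H) f)
    (h0 : ∀ x ∈ Set.Icc (0:ℝ) H, 0 ≤ f x) {t u : ℝ} (hu : 0 ≤ u) (htu : u ≤ t) (ht : t ≤ H) :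
    u * f t ≤ t * f u := by
  have := aux_left (aux_refl hf) (fun x hx => h0 _ ⟨by linarith [hx.2], by linarith [hx.1]⟩)
    (t := H - t) (u := H - u) (by linarith) (by linarith) (by linarith)
  simpa using this

/-- multiplicative comparison -/
lemma aux_mul {H k c : ℝ} {f : ℝ → ℝ} (hf : ConcaveOn ℝ (Set.Icc 0 H) f)
    (h0 : ∀ x ∈ Set.Icc (0:ℝ) H, 0 ≤ f x) {t u : ℝ} (ht : t ∈ Set.Icc 0 H) (hu : u ∈ Set.Icc 0 H)
    (hk : 0 < k) (hkc : k ≤ c)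
    (h1 : k * t ≤ c * u) (h2 : k * (H - t) ≤ c * (H - u)) : k * f t ≤ c * f u := by
  have fu := h0 u hu
  have ft := h0 t ht
  rcases lt_trichotomy t u with h | h | h
  · have hlt : u < H := by
      by_contra hcon
      have : u = H := le_antisymm hu.2 (not_lt.1 hcon)
      subst this
      have : 0 < k * (u - t) := mul_pos hk (by linarith)
      simp at h2
      linarith
    have a := aux_left hf h0 ht.1 h.le hu.2
    have hp : 0 < H - u := by linarith
    refine le_of_mul_le_mul_left ?_ hp
    calc (H - u) * (k * f t) = k * ((H - u) * f t) := by ring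
      _ ≤ k * ((H - t) * f u) := by gcongr
      _ = (k * (H - t)) * f u := by ring
      _ ≤ (c * (H - u)) * f u := by gcongr
      _ = _ := by ring
  · subst h; gcongr
  · have hlt : 0 < u := by
      by_contra hcon
      have : u = 0 := le_antisymm (not_lt.1 hcon) hu.1
      subst this
      have : 0 < k * t := mul_pos hk h
      simp at h1
      linarith
    have a := aux_right hf h0 hu.1 h.le ht.2
    refine le_of_mul_le_mul_left ?_ hlt
    calc u * (k * f t) = k * (u * f t) := by ring
      _ ≤ k * (t * f u) := by gcongr
      _ = (k * t) * f u := by ring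
      _ ≤ (c * u) * f u := by gcongr
      _ = _ := by ring

/-- one-sided uniform bound near a point -/
lemma aux_near {h : ℝ} {F : ℕ → ℝ → ℝ} {ψ : ℝ → ℝ}
    (hF : ∀ᶠ n in Filter.atTop, ConcaveOn ℝ (Set.Icc 0 h) (F n))
    (hF0 : ∀ᶠ n in Filter.atTop, ∀ x ∈ Set.Icc (0:ℝ) h, 0 ≤ F n x)
    (hψ0 : ∀ x ∈ Set.Icc (0:ℝ) h, 0 ≤ ψ x)
    (hup : ∀ x ∈ Set.Icc (0:ℝ) h, ∀ ε > 0, ∀ᶠ n in Filter.atTop, F n x < ψ x + ε)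
    {x : ℝ} (hx : 0 ≤ x) (hxh : x < h) {ε : ℝ} (hε : 0 < ε) :
    ∃ z, x < z ∧ ∀ᶠ n in Filter.atTop, ∀ y, x < y → y ≤ z → F n y < ψ y + ε := by
  set S : Set ℝ := (fun y => ψ y / (h - y)) '' Set.Ioo x h with hS
  have hne : S.Nonempty := ((Set.nonempty_Ioo).2 hxh).image _
  have hbd : BddBelow S := by
    refine ⟨0, ?_⟩
    rintro _ ⟨y, hy, rfl⟩
    exact div_nonneg (hψ0 y ⟨hx.trans hy.1.le, hy.2.le⟩) (by linarith [hy.2])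
  have hh : 0 < h := by linarith
  set e := ε / (2 * h) with he
  have hep : 0 < e := by positivity
  obtain ⟨_, ⟨z, hz, rfl⟩, hzl⟩ := Real.lt_sInf_add_pos hne hep
  have hzp : 0 < h - z := by linarith [hz.2]
  refine ⟨z, hz.1, ?_⟩
  filter_upwards [hF, hF0, hup z ⟨hx.trans hz.1.le, hz.2.le⟩ (e * (h - z)) (by positivity)]
    with n hn hn0 hnz y hxy hyz
  have hyp : 0 < h - y := by linarith
  have h1 := aux_left hn hn0 (t := y) (u := z) (by linarith) hyz hz.2.le
  have h2 : sInf S ≤ ψ y / (h - y) := csInf_le hbd ⟨y, ⟨hxy, by linarith [hz.2]⟩, rfl⟩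
  have h3 : F n y / (h - y) ≤ F n z / (h - z) := by
    rw [div_le_div_iff₀ hyp hzp]; linarith
  have h4 : F n z / (h - z) < ψ z / (h - z) + e := by
    rw [div_add' _ _ _ hzp.ne']
    gcongr
  have h5 : F n y / (h - y) < ψ y / (h - y) + 2 * e := by
    simp only at hzl; linarith
  rw [div_add' _ _ _ hyp.ne', div_lt_div_iff_of_pos_right hyp] at h5
  have h6 : 2 * e * (h - y) ≤ 2 * e * h := by gcongr; linarith
  have h7 : 2 * e * h = ε := by rw [he]; field_simp
  linarith

lemma aux_unif {h : ℝ} {F : ℕ → ℝ → ℝ} {ψ : ℝ → ℝ}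
    (hF : ∀ᶠ n in Filter.atTop, ConcaveOn ℝ (Set.Icc 0 h) (F n))
    (hF0 : ∀ᶠ n in Filter.atTop, ∀ x ∈ Set.Icc (0:ℝ) h, 0 ≤ F n x)
    (hψ0 : ∀ x ∈ Set.Icc (0:ℝ) h, 0 ≤ ψ x)
    (hlo : ∀ᶠ n in Filter.atTop, ∀ x ∈ Set.Icc (0:ℝ) h, ψ x ≤ F n x)
    (hup : ∀ x ∈ Set.Icc (0:ℝ) h, ∀ ε > 0, ∀ᶠ n in Filter.atTop, F n x < ψ x + ε) :
    TendstoUniformlyOn F ψ Filter.atTop (Set.Icc 0 h) := by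
  rw [← tendstoLocallyUniformlyOn_iff_tendstoUniformlyOn_of_compact isCompact_Icc,
    Metric.tendstoLocallyUniformlyOn_iff]
  intro ε hε x hx
  have R : ∃ z, x < z ∧ ∀ᶠ n in Filter.atTop, ∀ y ∈ Set.Icc (0:ℝ) h,
      x < y → y ≤ z → F n y < ψ y + ε := by
    rcases eq_or_lt_of_le hx.2 with e | l
    · exact ⟨x + 1, by linarith, Filter.Eventually.of_forall
        fun n y hy h1 _ => absurd hy.2 (by linarith)⟩
    · obtain ⟨z, hz, H⟩ := aux_near hF hF0 hψ0 hup hx.1 l hε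
      exact ⟨z, hz, H.mono fun n hn y _ => hn y⟩
  have L : ∃ z, z < x ∧ ∀ᶠ n in Filter.atTop, ∀ y ∈ Set.Icc (0:ℝ) h,
      y < x → z ≤ y → F n y < ψ y + ε := by
    rcases eq_or_lt_of_le hx.1 with e | l
    · exact ⟨x - 1, by linarith, Filter.Eventually.of_forall
        fun n y hy h1 _ => absurd hy.1 (by linarith)⟩
    · have m : ∀ x ∈ Set.Icc (0:ℝ) h, h - x ∈ Set.Icc (0:ℝ) h := fun x hx =>
        ⟨by linarith [hx.2], by linarith [hx.1]⟩
      obtain ⟨z, hz, H⟩ := aux_near (F := fun n x => F n (h - x)) (ψ := fun x => ψ (h - x))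
        (hF.mono fun n hn => aux_refl hn) (hF0.mono fun n hn y hy => hn _ (m y hy))
        (fun y hy => hψ0 _ (m y hy)) (fun y hy => hup _ (m y hy)) (x := h - x)
        (m x hx).1 (by linarith) hε
      refine ⟨h - z, by linarith, H.mono fun n hn y _ h1 h2 => ?_⟩
      simpa using hn (h - y) (by linarith) (by linarith)
  obtain ⟨z, hz, HR⟩ := R
  obtain ⟨w, hw, HL⟩ := L
  refine ⟨Set.Icc w z ∩ Set.Icc 0 h, ?_, ?_⟩
  · rw [Set.inter_comm]
    exact Filter.inter_mem self_mem_nhdsWithin (mem_nhdsWithin_of_mem_nhds (Icc_mem_nhds hw hz))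
  · filter_upwards [HR, HL, hlo, hup x hx ε hε] with n h1 h2 h3 h4 y hy
    have k : F n y < ψ y + ε := by
      rcases lt_trichotomy y x with c | c | c
      · exact h2 y hy.2 c hy.1.1
      · rw [c]; exact h4
      · exact h1 y hy.2 c hy.1.2
    rw [dist_comm, Real.dist_eq, abs_lt]
    constructor <;> linarith [h3 y hy.2]

/-- For a sequence of bounded concave nonnegative functions `φ_n : [0, nh] → [0,∞)`
satisfying `φ_{n+m} ≤ φ_n ⊗ φ_m`, the functions `x ↦ (1/n) φ_n(nx)` converge
uniformly on `[0,h]` to a concave function equal to their pointwise infimum. -/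
theorem phi_tendstoUniformly (h : ℝ) (hh : 0 < h) (φ : ℕ → ℝ → ℝ)
    (hconc : ∀ n : ℕ, 1 ≤ n → ConcaveOn ℝ (Set.Icc 0 ((n : ℝ) * h)) (φ n))
    (hnonneg : ∀ n : ℕ, 1 ≤ n → ∀ x ∈ Set.Icc (0 : ℝ) ((n : ℝ) * h), 0 ≤ φ n x)
    (hbdd : ∀ n : ℕ, 1 ≤ n → ∃ C : ℝ, ∀ x ∈ Set.Icc (0 : ℝ) ((n : ℝ) * h), φ n x ≤ C)
    (hsub : ∀ n : ℕ, 1 ≤ n → ∀ m : ℕ, 1 ≤ m →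
      ∀ x ∈ Set.Icc (0 : ℝ) (((n : ℝ) + (m : ℝ)) * h),
        φ (n + m) x ≤ tropConv ((n : ℝ) * h) ((m : ℝ) * h) (φ n) (φ m) x) :
    ∃ ψ : ℝ → ℝ,
      ConcaveOn ℝ (Set.Icc 0 h) ψ ∧
      (∀ x ∈ Set.Icc (0 : ℝ) h,
        ψ x = sInf {y | ∃ n : ℕ, 1 ≤ n ∧ y = (1 / (n : ℝ)) * φ n ((n : ℝ) * x)}) ∧
      TendstoUniformlyOn (fun (n : ℕ) (x : ℝ) => (1 / (n : ℝ)) * φ n ((n : ℝ) * x)) ψ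
        Filter.atTop (Set.Icc 0 h) := by
  -- multiples
  have hmul : ∀ n : ℕ, 1 ≤ n → ∀ k : ℕ, 1 ≤ k → ∀ y ∈ Set.Icc (0:ℝ) ((k:ℝ) * n * h),
      φ (k * n) y ≤ k * φ n (y / k) := by
    intro n hn k hk
    have hn' : (0:ℝ) < n := by exact_mod_cast hn
    induction k, hk using Nat.le_induction with
    | base => intro y hy; simp
    | succ k hk ih =>
      intro y hy
      have hk' : (0:ℝ) < k := by exact_mod_cast hk
      have hk1 : (0:ℝ) < (k:ℝ) + 1 := by positivity
      push_cast at hy ⊢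
      have hs := hsub (k * n) (Nat.mul_pos hk hn) n hn y
        ⟨hy.1, by push_cast; nlinarith [hy.2]⟩
      rw [show (k + 1) * n = k * n + n by ring]
      refine hs.trans (Real.sSup_le ?_ ?_)
      · rintro _ ⟨a, b, ha, hab, hb, hbb, rfl, rfl⟩
        push_cast at hab
        have h1 := ih a ⟨ha, hab⟩
        have hm : a / k ∈ Set.Icc (0:ℝ) (n * h) :=
          ⟨by positivity, by rw [div_le_iff₀ hk']; linarith⟩
        have h2 := aux_conc (hconc n hn) hm (y := b) ⟨hb, hbb⟩ (a := k / (k + 1)) (b := 1 / (k + 1))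
          (by positivity) (by positivity) (by field_simp)
        have e : ((k:ℝ) / (k + 1)) • (a / k) + ((1:ℝ) / (k + 1)) • b = (a + b) / (k + 1) := by
          simp only [smul_eq_mul]; field_simp
        rw [e] at h2
        simp only [smul_eq_mul] at h2
        have h3 : ((k:ℝ) + 1) * (k / (k + 1) * φ n (a / k) + 1 / (k + 1) * φ n b)
          = k * φ n (a / k) + φ n b := by field_simp
        have h4 := mul_le_mul_of_nonneg_left h2 hk1.le
        linarith
      · refine mul_nonneg hk1.le (hnonneg n hn _ ⟨div_nonneg hy.1 hk1.le, ?_⟩)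
        rw [div_le_iff₀ hk1]; linarith [hy.2]
  have hmem : ∀ n : ℕ, ∀ x ∈ Set.Icc (0:ℝ) h, (n:ℝ) * x ∈ Set.Icc (0:ℝ) (n * h) :=
    fun n x hx => ⟨mul_nonneg n.cast_nonneg hx.1, by gcongr; exact hx.2⟩
  -- key
  have hkey : ∀ n : ℕ, 1 ≤ n → ∀ k : ℕ, 1 ≤ k → ∀ r : ℕ, 1 ≤ r → ∀ C : ℝ,
      (∀ y ∈ Set.Icc (0 : ℝ) ((r : ℝ) * h), φ r y ≤ C) → ∀ x ∈ Set.Icc (0:ℝ) h,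
      φ (k * n + r) (((k * n + r : ℕ):ℝ) * x)
        ≤ ((k * n + r : ℕ):ℝ) / n * φ n (n * x) + C := by
    intro n hn k hk r hr C hC x hx
    have hn' : (0:ℝ) < n := by exact_mod_cast hn
    have hk' : (0:ℝ) < k := by exact_mod_cast hk
    have hr' : (0:ℝ) < r := by exact_mod_cast hr
    have hC0 : 0 ≤ C := (hnonneg r hr 0 ⟨le_rfl, by positivity⟩).trans
      (hC 0 ⟨le_rfl, by positivity⟩)
    have hs := hsub (k * n) (Nat.mul_pos hk hn) r hr (((k * n + r : ℕ):ℝ) * x)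
      (by have := hmem (k * n + r) x hx; push_cast at this ⊢; exact this)
    have hfx := hnonneg n hn _ (hmem n x hx)
    refine hs.trans (Real.sSup_le ?_ (by positivity))
    rintro _ ⟨a, b, ha, hab, hb, hbb, hx', rfl⟩
    push_cast at hab hx' ⊢
    have h1 := hmul n hn k hk a ⟨ha, hab⟩
    have h2 := hC b ⟨hb, hbb⟩
    have hm : a / k ∈ Set.Icc (0:ℝ) (n * h) :=
      ⟨by positivity, by rw [div_le_iff₀ hk']; linarith⟩
    have h3 := aux_mul (hconc n hn) (hnonneg n hn) (k := k) (c := ((k:ℝ) * n + r) / n)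
      hm (hmem n x hx) hk' (by rw [le_div_iff₀ hn']; linarith)
      (by
        have e1 : (k:ℝ) * (a / k) = a := by field_simp
        have e2 : ((k:ℝ) * n + r) / n * (n * x) = (k * n + r) * x := by field_simp
        rw [e1, e2]; linarith)
      (by
        have e1 : (k:ℝ) * (n * h - a / k) = k * n * h - a := by field_simp
        have e2 : ((k:ℝ) * n + r) / n * (n * h - n * x) = (k * n + r) * h - (k * n + r) * x := by
          field_simp
        rw [e1, e2]; linarith)
    linarith
  set F : ℕ → ℝ → ℝ := fun n x => (1 / (n : ℝ)) * φ n ((n : ℝ) * x) with hFdef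
  have hFc : ∀ n : ℕ, 1 ≤ n → ConcaveOn ℝ (Set.Icc 0 h) (F n) := by
    intro n hn
    refine ⟨convex_Icc _ _, ?_⟩
    intro x hx y hy a b ha hb hab
    have := (hconc n hn).2 (hmem n x hx) (hmem n y hy) ha hb hab
    have e : a • ((n:ℝ) * x) + b • ((n:ℝ) * y) = n * (a • x + b • y) := by
      simp only [smul_eq_mul]; ring
    rw [e] at this
    simp only [hFdef, smul_eq_mul] at this ⊢
    have h2 := mul_le_mul_of_nonneg_left this (show (0:ℝ) ≤ 1 / n by positivity)
    linarith
  have hF0 : ∀ n : ℕ, 1 ≤ n → ∀ x ∈ Set.Icc (0:ℝ) h, 0 ≤ F n x := fun n hn x hx =>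
    mul_nonneg (by positivity) (hnonneg n hn _ (hmem n x hx))
  have hne : ∀ x, {y | ∃ n : ℕ, 1 ≤ n ∧ y = F n x}.Nonempty := fun x => ⟨F 1 x, 1, le_rfl, rfl⟩
  have hlo : ∀ n : ℕ, 1 ≤ n → ∀ x ∈ Set.Icc (0:ℝ) h,
      sInf {y | ∃ n : ℕ, 1 ≤ n ∧ y = F n x} ≤ F n x := by
    intro n hn x hx
    refine csInf_le ⟨0, ?_⟩ ⟨n, hn, rfl⟩
    rintro _ ⟨m, hm, rfl⟩
    exact hF0 m hm x hx
  refine ⟨fun x => sInf {y | ∃ n : ℕ, 1 ≤ n ∧ y = F n x}, ?_, fun x hx => rfl, ?_⟩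
  · refine ⟨convex_Icc _ _, ?_⟩
    intro x hx y hy a b ha hb hab
    refine le_csInf (hne _) ?_
    rintro _ ⟨n, hn, rfl⟩
    refine le_trans ?_ ((hFc n hn).2 hx hy ha hb hab)
    simp only [smul_eq_mul]
    gcongr
    · exact hlo n hn x hx
    · exact hlo n hn y hy
  · refine aux_unif ?_ ?_ ?_ ?_ ?_
    · filter_upwards [Filter.eventually_ge_atTop 1] with n hn using hFc n hn
    · filter_upwards [Filter.eventually_ge_atTop 1] with n hn using hF0 n hn
    · intro x hx
      refine le_csInf (hne _) ?_
      rintro _ ⟨n, hn, rfl⟩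
      exact hF0 n hn x hx
    · filter_upwards [Filter.eventually_ge_atTop 1] with n hn using hlo n hn
    · intro x hx ε hε
      obtain ⟨_, ⟨n, hn, rfl⟩, hlt⟩ := Real.lt_sInf_add_pos (hne x) (half_pos hε)
      have hn' : (0:ℝ) < n := by exact_mod_cast hn
      -- common bound for the remainders
      choose! C hC using hbdd
      set D := ∑ r ∈ Finset.Icc 1 n, |C r| with hD
      obtain ⟨M, hM⟩ := exists_nat_gt (D / (ε / 2))
      filter_upwards [Filter.eventually_ge_atTop (M + 2 * n + 1)] with N hN
      have hdm := Nat.div_add_mod (N - 1) n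
      have hmod := Nat.mod_lt (N - 1) hn
      set k := (N - 1) / n with hk
      set r := (N - 1) % n + 1 with hr
      have hk1 : 1 ≤ k := (Nat.one_le_div_iff hn).2 (by omega)
      have hNe : N = k * n + r := by rw [mul_comm]; omega
      have hr1 : 1 ≤ r := by omega
      have hCD : C r ≤ D := (le_abs_self _).trans
        (Finset.single_le_sum (f := fun r => |C r|) (fun i _ => abs_nonneg _)
          (Finset.mem_Icc.2 ⟨hr1, by omega⟩))
      have key := hkey n hn k hk1 r hr1 (C r) (hC r hr1) x hx
      rw [← hNe] at key
      have hNM : (M:ℝ) ≤ N := by exact_mod_cast (by omega : M ≤ N)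
      have hN0 : (0:ℝ) < N := by exact_mod_cast (by omega : 0 < N)
      have hDN : D < (ε / 2) * N := by
        rw [div_lt_iff₀ (by positivity)] at hM
        nlinarith
      have h5 : F N x < F n x + ε / 2 := by
        have e1 : F N x = φ N (N * x) / N := by simp only [hFdef]; ring
        have e2 : (N:ℝ) / n * φ n (n * x) = F n x * N := by simp only [hFdef]; ring
        rw [e1, div_lt_iff₀ hN0]
        rw [e2] at key
        linarith
      linarith
end
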